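/- Let X be a Banach space, Y a normed space, P a metric space with metric ρ, F : X ⇉ Y a set-valued mapping with closed graph, g : X × P → Y, φ : X × P → ℝ, and suppose S(p̄) ≠ ∅. Assume there exist numbers α > ℓ ≥ 0 and δ > 0 and a neighborhood O of p̄ such that: (i) for every p ∈ O and every u ∈ S(p), F has the α-covering property on the closed ball B_X(u, δ) relative to the closed ball B_Y(g(u, p̄), α δ); (ii) for every p ∈ O and u ∈ S(p), the mapping g(·, p̄) is Lipschitz continuous on B_X(u, δ) with modulus ℓ; (iii) g(x, ·) is continuous at p̄ uniformly in x ∈ X; (iv) there is κ₁ ≥ 0 such that |φ(u, p) − φ(x, p̄)| ≤ κ₁‖u − x‖ + κ₁ ρ(p, p̄) for all x ∈ S(p̄), u ∈ B_X(x, δ) and p ∈ O; (v) there is κ₂ ≥ 0 such that ‖g(u, p) − g(u, p̄)‖ ≤ κ₂ ρ(p, p̄) for all p ∈ O and all u with dist(u; S(p̄)) ≤ δ. Then the optimal value function μ is calm from below at p̄: with κ := κ₁ + κ₁κ₂(α − ℓ)⁻¹, there is a neighborhood W of p̄ such that μ(p) ≥ μ(p̄) − κ ρ(p, p̄) for all p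 ∈ W. -/

import Mathlib

/-!
Everything rests on an error bound for the inclusion `g(x, p₀) ∈ F(x)`: if `u ∈ S(p)` and
`η = ‖g(u, p) - g(u, p₀)‖ ≤ (α - ℓ) δ`, then some `x ∈ S(p₀)` satisfies `‖x - u‖ ≤ η / (α - ℓ)`.
This is the Lyusternik-Graves iteration (`exists_coincidence_near`): the covering property of `F`
turns a pair `(xₙ, yₙ)` of the graph into `(xₙ₊₁, g(xₙ, p₀))`, where a bound on the residual
`‖yₙ - g(xₙ, p₀)‖`, divided by `α`, bounds `‖xₙ₊₁ - xₙ‖`; by the Lipschitz property of `g(·, p₀)`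
the residual bounds decrease by the factor `ℓ / α < 1`; the limit solves the inclusion because the graph of `F` is closed.

Uniform continuity of `g` makes `η` small for all `u ∈ S(p)` at once when `p` is near `p₀`.
Since then `dist(u; S(p₀)) ≤ δ`, calmness of `g` improves this to `η ≤ κ₂ ρ(p, p₀)`, and calmness
of `φ` compares `φ(u, p)` with `φ(x, p₀) ≥ μ(p₀)`.
-/

open Metric Filter

/-- `Φ` has the `α`-covering property on `U` relative to `V`:
`Φ(x) ∩ V + α r B_Y ⊆ Φ(x + r B_X)` whenever `x + r B_X ⊆ U` and `r > 0`. -/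
def CoversOn {X Y : Type*} [NormedAddCommGroup X] [NormedAddCommGroup Y]
    (α : ℝ) (Φ : X → Set Y) (U : Set X) (V : Set Y) : Prop :=
  ∀ x : X, ∀ r : ℝ, 0 < r → closedBall x r ⊆ U →
    ∀ y ∈ Φ x ∩ V, ∀ z : Y, ‖z‖ ≤ α * r → ∃ u ∈ closedBall x r, y + z ∈ Φ u

/-- `Φ` has the `α`-covering property around a point `(x₀, y₀)` of its graph. -/
def CoversAround {X Y : Type*} [NormedAddCommGroup X] [NormedAddCommGroup Y]
    (α : ℝ) (Φ : X → Set Y) (x₀ : X) (y₀ : Y) : Prop :=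
  ∃ U ∈ nhds x₀, ∃ V ∈ nhds y₀, CoversOn α Φ U V

/-- `Φ` is Lipschitz-like on `U` relative to `V` with modulus `ℓ`:
`Φ(x) ∩ V ⊆ Φ(u) + ℓ‖x − u‖ B_Y` for all `x, u ∈ U`. -/
def LipschitzLikeOn {X Y : Type*} [NormedAddCommGroup X] [NormedAddCommGroup Y]
    (ℓ : ℝ) (Φ : X → Set Y) (U : Set X) (V : Set Y) : Prop :=
  ∀ x ∈ U, ∀ u ∈ U, ∀ y ∈ Φ x ∩ V, ∃ v ∈ Φ u, ‖y - v‖ ≤ ℓ * ‖x - u‖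

/-- `Φ` is closed around `(x₀, y₀)`: for some neighborhoods `U` of `x₀`, `V` of `y₀`,
the set `gph Φ ∩ (cl U × cl V)` is closed. -/
def ClosedAround {X Y : Type*} [NormedAddCommGroup X] [NormedAddCommGroup Y]
    (Φ : X → Set Y) (x₀ : X) (y₀ : Y) : Prop :=
  ∃ U ∈ nhds x₀, ∃ V ∈ nhds y₀,
    IsClosed {q : X × Y | q.2 ∈ Φ q.1 ∧ q.1 ∈ closure U ∧ q.2 ∈ closure V}

/-- Inner (lower) semicontinuity of a set-valued mapping at a point. -/
def InnerSemicontinuousAt {P Y : Type*} [TopologicalSpace P] [TopologicalSpace Y]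
    (G : P → Set Y) (p₀ : P) : Prop :=
  ∀ V : Set Y, IsOpen V → (G p₀ ∩ V).Nonempty → ∀ᶠ p in nhds p₀, (G p ∩ V).Nonempty

/-- The covering property also holds for radius `0`, which `CoversOn` excludes. -/
lemma CoversOn.exists_of_nonneg {X Y : Type*} [NormedAddCommGroup X] [NormedAddCommGroup Y]
    {α : ℝ} {Φ : X → Set Y} {U : Set X} {V : Set Y} (h : CoversOn α Φ U V)
    {x : X} {r : ℝ} (hr : 0 ≤ r) (hU : closedBall x r ⊆ U) {y w : Y} (hy : y ∈ Φ x)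
    (hyV : y ∈ V) (hw : ‖y - w‖ ≤ α * r) : ∃ u, ‖u - x‖ ≤ r ∧ w ∈ Φ u := by
  rcases hr.eq_or_lt with rfl | hr
  · have h0 : y - w = 0 := by
      rw [← norm_le_zero_iff]
      simpa using hw
    exact ⟨x, by simp, by rwa [← sub_eq_zero.1 h0]⟩
  · obtain ⟨u, hu, huw⟩ := h x r hr hU y ⟨hy, hyV⟩ (w - y) (by rwa [norm_sub_rev])
    exact ⟨u, by rwa [mem_closedBall, dist_eq_norm] at hu, by simpa using huw⟩

/-- Lyusternik-Graves estimate: an approximate solution `(u, y₀)` of `G x ∈ F x` with residual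
at most `(α - ℓ) c`, where `c ≤ δ`, has an exact solution within distance `c`. -/
lemma exists_coincidence_near {X Y : Type*} [NormedAddCommGroup X] [CompleteSpace X]
    [NormedAddCommGroup Y] {F : X → Set Y} {G : X → Y}
    (hF : IsClosed {q : X × Y | q.2 ∈ F q.1})
    {α ℓ δ c : ℝ} (hℓ : 0 ≤ ℓ) (hℓα : ℓ < α) (hc : 0 ≤ c) (hcδ : c ≤ δ) {u : X} {y₀ : Y}
    (hcov : CoversOn α F (closedBall u δ) (closedBall (G u) (α * δ)))
    (hlip : ∀ x₁ ∈ closedBall u δ, ∀ x₂ ∈ closedBall u δ, ‖G x₁ - G x₂‖ ≤ ℓ * ‖x₁ - x₂‖)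
    (hy₀ : y₀ ∈ F u) (hres : ‖y₀ - G u‖ ≤ (α - ℓ) * c) :
    ∃ x, G x ∈ F x ∧ ‖x - u‖ ≤ c := by
  have hα : 0 < α := hℓ.trans_lt hℓα
  obtain ⟨q, hq⟩ : ∃ q, q = ℓ / α := ⟨_, rfl⟩
  have hq0 : 0 ≤ q := hq ▸ by positivity
  have hq1 : q < 1 := by rw [hq, div_lt_one hα]; exact hℓα
  have hαq : α * q = ℓ := by rw [hq]; field_simp
  have hqn : ∀ n : ℕ, 0 ≤ q ^ n := fun n => by positivity
  have hmem : ∀ {a : X}, ‖a - u‖ ≤ c → a ∈ closedBall u δ := fun {a} h => by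
    rw [mem_closedBall, dist_eq_norm]; exact h.trans hcδ
  have hu : u ∈ closedBall u δ := hmem (by simpa using hc)
  -- The `n`-th step has length at most `c (1 - q) q ^ n`; these lengths sum to `c (1 - q ^ n)`.
  let Inv : ℕ → X × Y → Prop := fun n z =>
    z.2 ∈ F z.1 ∧ ‖z.2 - G z.1‖ ≤ α * (c * (1 - q) * q ^ n) ∧
      ‖z.1 - u‖ ≤ c * (1 - q ^ n) ∧ ‖z.2 - G u‖ ≤ α * δ
  have hInvc : ∀ n z, Inv n z → ‖z.1 - u‖ ≤ c := fun n z hz =>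
    hz.2.2.1.trans (by nlinarith [mul_nonneg hc (hqn n)])
  have hstep : ∀ (n : ℕ) (z : X × Y), ∃ z' : X × Y,
      Inv n z → Inv (n + 1) z' ∧ ‖z'.1 - z.1‖ ≤ c * (1 - q) * q ^ n := by
    intro n z
    by_cases hz : Inv n z
    swap
    · exact ⟨z, fun h => absurd h hz⟩
    have hac := hInvc n z hz
    obtain ⟨hzF, hzr, hzu, hzV⟩ := hz
    have hr : 0 ≤ c * (1 - q) * q ^ n := mul_nonneg (mul_nonneg hc (by linarith)) (hqn n)
    have hsum : c * (1 - q ^ n) + c * (1 - q) * q ^ n = c * (1 - q ^ (n + 1)) := by ring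
    have hle : c * (1 - q ^ (n + 1)) ≤ c := by nlinarith [mul_nonneg hc (hqn (n + 1))]
    obtain ⟨a, ha, haF⟩ := hcov.exists_of_nonneg hr
      (closedBall_subset_closedBall' (by rw [dist_eq_norm]; linarith)) hzF
      (by rwa [mem_closedBall, dist_eq_norm]) hzr
    have hau : ‖a - u‖ ≤ c * (1 - q ^ (n + 1)) := by
      linarith [norm_sub_le_norm_sub_add_norm_sub a z.1 u]
    refine ⟨(a, G z.1), fun _ => ⟨⟨haF, ?_, hau, ?_⟩, ha⟩⟩
    · calc ‖G z.1 - G a‖ ≤ ℓ * ‖z.1 - a‖ := hlip _ (hmem hac) _ (hmem (hau.trans hle))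
        _ ≤ ℓ * (c * (1 - q) * q ^ n) := by rw [norm_sub_rev]; gcongr
        _ = α * (c * (1 - q) * q ^ (n + 1)) := by rw [← hαq]; ring
    · calc ‖G z.1 - G u‖ ≤ ℓ * ‖z.1 - u‖ := hlip _ (hmem hac) _ hu
        _ ≤ α * δ := by gcongr; exact hac.trans hcδ
  choose next hnext using hstep
  let s : ℕ → X × Y := fun n => Nat.rec (u, y₀) next n
  have hs : ∀ n, Inv n (s n) := by
    intro n
    induction n with
    | zero =>
      refine ⟨hy₀, ?_, by simp [s], ?_⟩
      · calc ‖y₀ - G u‖ ≤ (α - ℓ) * c := hres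
          _ = α * (c * (1 - q) * q ^ 0) := by rw [← hαq]; ring
      · calc ‖y₀ - G u‖ ≤ (α - ℓ) * c := hres
          _ ≤ α * δ := by gcongr; linarith
    | succ n ih => exact (hnext n _ ih).1
  have hcauchy : CauchySeq fun n => (s n).1 :=
    cauchySeq_of_le_geometric q (c * (1 - q)) hq1 fun n => by
      rw [dist_comm, dist_eq_norm]; exact (hnext n _ (hs n)).2
  obtain ⟨x, hx⟩ := cauchySeq_tendsto_of_complete hcauchy
  have hxu : ‖x - u‖ ≤ c :=
    le_of_tendsto (hx.sub_const u).norm (Eventually.of_forall fun n => hInvc n _ (hs n))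
  refine ⟨x, ?_, hxu⟩
  -- `yₙ → G x`, since both `‖yₙ - G xₙ‖` and `‖G xₙ - G x‖` tend to `0`.
  have hy : Tendsto (fun n => (s n).2) atTop (nhds (G x)) := by
    rw [tendsto_iff_norm_sub_tendsto_zero]
    have h1 : Tendsto (fun n : ℕ => α * (c * (1 - q) * q ^ n) + ℓ * ‖(s n).1 - x‖)
        atTop (nhds 0) := by
      have h2 := (((tendsto_pow_atTop_nhds_zero_of_lt_one hq0 hq1).const_mul
        (c * (1 - q))).const_mul α).add
          ((tendsto_iff_norm_sub_tendsto_zero.1 hx).const_mul ℓ)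
      simpa using h2
    refine squeeze_zero (fun n => norm_nonneg _) (fun n => ?_) h1
    have h3 := hlip _ (hmem (hInvc n _ (hs n))) _ (hmem hxu)
    linarith [norm_sub_le_norm_sub_add_norm_sub (s n).2 (G (s n).1) (G x), (hs n).2.1]
  exact hF.mem_of_tendsto (hx.prodMk_nhds hy) (Eventually.of_forall fun n => (hs n).1)

/-- Calmness from below of the optimal value function
`μ(p) = inf{φ(x,p) : g(x,p) ∈ F(x)}` (Theorem 5.3, second part). -/
theorem optimal_value_calm_from_below {X Y P : Type*}
    [NormedAddCommGroup X] [CompleteSpace X]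
    [NormedAddCommGroup Y] [MetricSpace P]
    (F : X → Set Y) (g : X → P → Y) (φ : X → P → ℝ) (p₀ : P)
    (S : P → Set X) (hSdef : S = fun p => {x : X | g x p ∈ F x})
    (μ : P → EReal) (hμdef : μ = fun p => ⨅ x ∈ S p, ((φ x p : ℝ) : EReal))
    (hFclosed : IsClosed {q : X × Y | q.2 ∈ F q.1})
    (hSne : (S p₀).Nonempty)
    (α ℓ δ : ℝ) (hℓ : 0 ≤ ℓ) (hℓα : ℓ < α) (hδ : 0 < δ)
    (O : Set P) (hO : O ∈ nhds p₀)
    -- (i) semilocal uniform covering of F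
    (hcov : ∀ p ∈ O, ∀ u ∈ S p,
      CoversOn α F (closedBall u δ) (closedBall (g u p₀) (α * δ)))
    -- (ii) g(·,p₀) Lipschitz with modulus ℓ on the balls B(u,δ), u ∈ S(p), p ∈ O
    (hlip : ∀ p ∈ O, ∀ u ∈ S p, ∀ x₁ ∈ closedBall u δ, ∀ x₂ ∈ closedBall u δ,
      ‖g x₁ p₀ - g x₂ p₀‖ ≤ ℓ * ‖x₁ - x₂‖)
    -- (iii) g(x,·) continuous at p₀ uniformly in x ∈ X
    (hgcont : ∀ ε : ℝ, 0 < ε → ∃ W ∈ nhds p₀, ∀ x : X, ∀ p ∈ W,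
      ‖g x p - g x p₀‖ ≤ ε)
    -- (iv) φ uniformly calm at (x,p₀), x ∈ S(p₀), with modulus κ₁
    (κ₁ : ℝ) (hκ₁ : 0 ≤ κ₁)
    (hφcalm : ∀ x ∈ S p₀, ∀ u ∈ closedBall x δ, ∀ p ∈ O,
      |φ u p - φ x p₀| ≤ κ₁ * ‖u - x‖ + κ₁ * dist p p₀)
    -- (v) g(u,·) calm at p₀ uniformly in u with dist(u; S(p₀)) ≤ δ, with modulus κ₂
    (κ₂ : ℝ) (hκ₂ : 0 ≤ κ₂)
    (hgcalm : ∀ p ∈ O, ∀ u : X, Metric.infDist u (S p₀) ≤ δ →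
      ‖g u p - g u p₀‖ ≤ κ₂ * dist p p₀) :
    ∃ W ∈ nhds p₀, ∀ p ∈ W,
      μ p₀ - (((κ₁ + κ₁ * κ₂ * (α - ℓ)⁻¹) * dist p p₀ : ℝ) : EReal) ≤ μ p := by
  subst hSdef hμdef
  have hαℓ : 0 < α - ℓ := sub_pos.2 hℓα
  obtain ⟨W, hW, hWg⟩ := hgcont ((α - ℓ) * δ) (by positivity)
  refine ⟨O ∩ W, inter_mem hO hW, fun p hp => le_iInf₂ fun u hu => ?_⟩
  obtain ⟨c, hc⟩ : ∃ c, c = ‖g u p - g u p₀‖ / (α - ℓ) := ⟨_, rfl⟩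
  have hcδ : c ≤ δ := by
    rw [hc, div_le_iff₀ hαℓ, mul_comm]; exact hWg u p hp.2
  obtain ⟨x, hxS, hxu⟩ := exists_coincidence_near (G := fun x => g x p₀) hFclosed hℓ hℓα
    (hc ▸ by positivity) hcδ (hcov p hp.1 u hu) (hlip p hp.1 u hu) hu
    (by rw [hc, mul_div_cancel₀ _ hαℓ.ne'])
  rw [norm_sub_rev] at hxu
  have hdist : dist u x ≤ δ := by rw [dist_eq_norm]; exact hxu.trans hcδ
  have hxS' : x ∈ {x | g x p₀ ∈ F x} := hxS
  have hg := hgcalm p hp.1 u ((infDist_le_dist_of_mem hxS').trans hdist)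
  have hφ := (abs_le.1 (hφcalm x hxS u hdist p hp.1)).1
  have hux : κ₁ * ‖u - x‖ ≤ κ₁ * (κ₂ * dist p p₀ / (α - ℓ)) := by
    gcongr
    exact hxu.trans (hc ▸ by gcongr)
  have hreal : φ x p₀ - (κ₁ + κ₁ * κ₂ * (α - ℓ)⁻¹) * dist p p₀ ≤ φ u p := by
    have : κ₁ * (κ₂ * dist p p₀ / (α - ℓ)) = κ₁ * κ₂ * (α - ℓ)⁻¹ * dist p p₀ := by
      rw [div_eq_mul_inv]; ring
    linarith
  refine (EReal.sub_le_sub (iInf₂_le x hxS) le_rfl).trans ?_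
  exact_mod_cast hreal
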